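/- There exists a finite set S of 319 points in ℝ² and two points p, q ∈ S with dist(p,q) = 7/3, such that the unit-distance graph on S is 4-colorable and every proper 4-coloring c of this graph satisfies c p ≠ c q (i.e., {p,q} is a non-monochromatic pair at distance 7/3). -/

import Mathlib

/-- The point `((a + b√33) / 12, (c√3 + d√11) / 12)` of the plane, for `z = (a, b, c, d)`. -/
noncomputable def latticePoint (z : ℕ × ℕ × ℕ × ℕ) : EuclideanSpace ℝ (Fin 2) :=
  !₂[(z.1 + z.2.1 * √33) / 12, (z.2.2.1 * √3 + z.2.2.2 * √11) / 12]

/-- The two integer equations that say that `latticePoint z` and `latticePoint w` are at distance `1`. -/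
def unitApart (z w : ℕ × ℕ × ℕ × ℕ) : Bool :=
  match z, w with
  | (a, b, c, d), (a', b', c', d') =>
    Nat.beq
      (a * a + a' * a' + 33 * (b * b + b' * b') + 3 * (c * c + c' * c') + 11 * (d * d + d' * d'))
      (144 + 2 * (a * a' + 33 * (b * b') + 3 * (c * c') + 11 * (d * d'))) &&
    Nat.beq (a * b + a' * b' + c * d + c' * d') (a * b' + a' * b + c * d' + c' * d)

theorem irrational_sqrt_thirty_three : Irrational √33 := by
  rw [show (33 : ℝ) = ((33 : ℕ) : ℝ) by norm_num, irrational_sqrt_natCast_iff]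
  rintro ⟨r, hr⟩
  have : r < 6 := by nlinarith
  interval_cases r <;> omega

theorem intCast_add_mul_sqrt_eq_zero {m n : ℤ} (h : (m : ℝ) + n * √33 = 0) : m = 0 ∧ n = 0 := by
  have hn : n = 0 := by
    by_contra hn
    apply irrational_sqrt_thirty_three
    refine ⟨-m / n, ?_⟩
    have hn' : (n : ℝ) ≠ 0 := by exact_mod_cast hn
    push_cast
    rw [div_eq_iff hn']
    linarith
  subst hn
  refine ⟨?_, rfl⟩
  simpa using h

theorem sqrt_thirty_three_eq : √33 = √3 * √11 := by
  rw [← Real.sqrt_mul (by norm_num)]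
  norm_num

theorem latticePoint_injective : Function.Injective latticePoint := by
  rintro ⟨a, b, c, d⟩ ⟨a', b', c', d'⟩ h
  have h₀ : ((a : ℝ) + b * √33) / 12 = (a' + b' * √33) / 12 := by
    simpa [latticePoint] using congrArg (fun x : EuclideanSpace ℝ (Fin 2) => x 0) h
  have h₁ : ((c : ℝ) * √3 + d * √11) / 12 = (c' * √3 + d' * √11) / 12 := by
    simpa [latticePoint] using congrArg (fun x : EuclideanSpace ℝ (Fin 2) => x 1) h
  have h3 : √3 * √3 = (3 : ℝ) := Real.mul_self_sqrt (by norm_num)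
  obtain ⟨ha, hb⟩ := intCast_add_mul_sqrt_eq_zero (m := a - a') (n := b - b') (by
    push_cast
    linarith)
  obtain ⟨hc, hd⟩ := intCast_add_mul_sqrt_eq_zero (m := 3 * (c - c')) (n := d - d') (by
    rw [sqrt_thirty_three_eq]
    push_cast
    linear_combination 12 * √3 * h₁ + (c' - c) * h3)
  simp only [Prod.mk.injEq]
  omega

theorem dist_latticePoint_sq (a b c d a' b' c' d' : ℕ) :
    dist (latticePoint (a, b, c, d)) (latticePoint (a', b', c', d')) ^ 2 =
      (((a : ℝ) - a') ^ 2 + 33 * (b - b') ^ 2 + 3 * (c - c') ^ 2 + 11 * (d - d') ^ 2 +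
        2 * ((a - a') * (b - b') + (c - c') * (d - d')) * √33) / 144 := by
  have h3 : √3 ^ 2 = (3 : ℝ) := Real.sq_sqrt (by norm_num)
  have h11 : √11 ^ 2 = (11 : ℝ) := Real.sq_sqrt (by norm_num)
  have h33 : √33 ^ 2 = (33 : ℝ) := Real.sq_sqrt (by norm_num)
  rw [EuclideanSpace.dist_eq, Real.sq_sqrt (Finset.sum_nonneg fun _ _ => sq_nonneg _)]
  simp only [latticePoint, Fin.sum_univ_two, Real.dist_eq, sq_abs, PiLp.toLp_apply,
    Matrix.cons_val_zero, Matrix.cons_val_one]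
  linear_combination ((b : ℝ) - b') ^ 2 / 144 * h33 + ((c : ℝ) - c') ^ 2 / 144 * h3 +
    ((d : ℝ) - d') ^ 2 / 144 * h11 -
    (c - c') * (d - d') / 72 * sqrt_thirty_three_eq

theorem dist_latticePoint_eq_one_iff (z w : ℕ × ℕ × ℕ × ℕ) :
    dist (latticePoint z) (latticePoint w) = 1 ↔ unitApart z w = true := by
  obtain ⟨a, b, c, d⟩ := z
  obtain ⟨a', b', c', d'⟩ := w
  rw [← sq_eq_sq₀ dist_nonneg zero_le_one, dist_latticePoint_sq]
  simp only [unitApart, Bool.and_eq_true, Nat.beq_eq]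
  constructor
  · intro h
    obtain ⟨h₁, h₂⟩ := intCast_add_mul_sqrt_eq_zero
      (m := ((a : ℤ) - a') ^ 2 + 33 * (b - b') ^ 2 + 3 * (c - c') ^ 2 + 11 * (d - d') ^ 2 - 144)
      (n := 2 * ((a - a') * (b - b') + (c - c') * (d - d'))) (by
        push_cast
        linear_combination 144 * h)
    constructor
    · zify
      linear_combination h₁
    · zify
      have h₃ := (mul_eq_zero_iff_left (two_ne_zero)).mp h₂
      linear_combination h₃
  · rintro ⟨h₁, h₂⟩
    have h₁' : (_ : ℝ) = _ := congrArg Nat.cast h₁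
    have h₂' : (_ : ℝ) = _ := congrArg Nat.cast h₂
    push_cast at h₁' h₂'
    linear_combination (h₁' + 2 * √33 * h₂') / 144


/-- Evaluate `n` before `f`. It is `f n`, in a form that makes the kernel compute `n` first. -/
noncomputable def force {α : Type} (n : ℕ) (f : ℕ → α) : α :=
  Nat.rec (f 0) (fun m _ => f m.succ) n

theorem force_eq {α : Type} (n : ℕ) (f : ℕ → α) : force n f = f n := by
  cases n <;> rfl

/-- Set difference of bit masks. -/
def maskDiff (a b : ℕ) : ℕ := Nat.xor a (Nat.land a b)

theorem testBit_maskDiff (a b v : ℕ) :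
    (maskDiff a b).testBit v = (a.testBit v && !b.testBit v) := by
  change (a ^^^ (a &&& b)).testBit v = _
  rw [Nat.testBit_xor, Nat.testBit_and]
  cases a.testBit v <;> cases b.testBit v <;> rfl

/-- The row of the vertex `v` in an adjacency matrix stored with `512` bits per row. The row of `v`
is at position `2 ^ v % 347`, so that it can be found from `bit = 2 ^ v`. -/
def matrixRow (T bit : ℕ) : ℕ :=
  Nat.mod (Nat.shiftRight T (Nat.mul 512 (Nat.mod bit 347))) (Nat.pow 2 512)

/-- The lowest bit of `N`. -/
def lowBit (N : ℕ) : ℕ := Nat.xor N (Nat.land N (Nat.sub N 1))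

theorem exists_lowBit_eq {N : ℕ} (h : N ≠ 0) : ∃ v, N.testBit v = true ∧ lowBit N = 2 ^ v := by
  change ∃ v, N.testBit v = true ∧ N ^^^ (N &&& (N - 1)) = 2 ^ v
  induction N using Nat.binaryRec' with
  | zero => exact absurd rfl h
  | bit b m _ ih =>
    cases b with
    | true =>
      refine ⟨0, by simp, ?_⟩
      have e : Nat.bit true m - 1 = Nat.bit false m := by simp [Nat.bit_val]
      rw [e, Nat.land_bit, Nat.xor_bit, Nat.and_self, Nat.xor_self]
      rfl
    | false =>
      have hm : m ≠ 0 := by rintro rfl; exact h rfl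
      obtain ⟨v, hv, e⟩ := ih hm
      refine ⟨v + 1, by simpa [Nat.testBit_succ, Nat.bit_val] using hv, ?_⟩
      have e' : Nat.bit false m - 1 = Nat.bit true (m - 1) := by
        simp only [Nat.bit_val, Bool.toNat_false, Bool.toNat_true]
        omega
      rw [e', Nat.land_bit, Nat.xor_bit, e, Nat.bit_val, pow_succ']
      simp

/-- Search states that remain to be refuted: the mask of the vertices that may still receive each
of the four colors, and the mask of the vertices whose color has not been propagated yet. -/
inductive PendingStates where
  | nil : PendingStates
  | cons (a b c d u : ℕ) (rest : PendingStates) : PendingStates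

/-- A continuation of the search, from a state and the hints that remain. -/
abbrev Search := ℕ → ℕ → ℕ → ℕ → ℕ → PendingStates → ℕ → Bool

/-- Branch over the four colors of the vertex given by the first hint. -/
noncomputable def branch (next : Search) (a b c d u : ℕ) (rest : PendingStates) (hints : ℕ) : Bool :=
  force (Nat.shiftLeft 1 (Nat.land hints 511)) fun bit =>
    force (Nat.shiftRight hints 9) fun hints' =>
      force (maskDiff a bit) fun a' => force (maskDiff b bit) fun b' =>
        force (maskDiff c bit) fun c' => force (maskDiff d bit) fun d' =>
          next a b' c' d' u (.cons a' b c' d' u (.cons a' b' c d' u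
            (.cons a' b' c' d u rest))) hints'

/-- Remove the color of the vertex in `bit` from its neighbors. -/
noncomputable def propagate (T : ℕ) (next : Search) (a b c d : ℕ) (rest : PendingStates)
    (hints bit u : ℕ) : Bool :=
  cond (Nat.beq (Nat.land a bit) 0)
    (cond (Nat.beq (Nat.land b bit) 0)
      (cond (Nat.beq (Nat.land c bit) 0)
        (force (maskDiff d (matrixRow T bit)) fun d' => next a b c d' u rest hints)
        (force (maskDiff c (matrixRow T bit)) fun c' => next a b c' d u rest hints))
      (force (maskDiff b (matrixRow T bit)) fun b' => next a b' c d u rest hints))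
    (force (maskDiff a (matrixRow T bit)) fun a' => next a' b c d u rest hints)

/-- Propagate the vertex in `bit`, or branch if there is none. -/
noncomputable def propagateOrBranch (T : ℕ) (next : Search) (a b c d u : ℕ) (rest : PendingStates)
    (hints bit : ℕ) : Bool :=
  cond (Nat.beq bit 0) (branch next a b c d u rest hints)
    (force (Nat.xor u bit) (propagate T next a b c d rest hints bit))

/-- Continue with the first pending state. -/
noncomputable def nextPending (next : Search) (rest : PendingStates) (hints : ℕ) : Bool :=
  PendingStates.rec true (fun a b c d u rest _ => next a b c d u rest hints) rest

/-- The mask of the vertices with at least two colors left. -/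
def atLeastTwo (a b c d : ℕ) : ℕ :=
  Nat.lor (Nat.lor (Nat.land a b) (Nat.land c d)) (Nat.land (Nat.lor a b) (Nat.lor c d))

/-- One step of `refute`: drop the current state `(a, b, c, d, u)` if some vertex has no color left,
propagate a vertex with a single color left, or branch over the colors of a vertex. -/
noncomputable def refuteStep (T full : ℕ) (next : Search)
    (a b c d u : ℕ) (rest : PendingStates) (hints : ℕ) : Bool :=
  cond (Nat.ble full (Nat.lor (Nat.lor a b) (Nat.lor c d)))
    (force (lowBit (maskDiff u (atLeastTwo a b c d)))
      (propagateOrBranch T next a b c d u rest hints))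
    (nextPending next rest hints)

/-- Depth-first refutation of 4-colorings by unit propagation and branching. The branching vertices
are read off from the base-512 digits of `hints`. -/
noncomputable def refute (T full fuel : ℕ) : ℕ → ℕ → ℕ → ℕ → ℕ → PendingStates → ℕ → Bool :=
  Nat.rec (fun _ _ _ _ _ _ _ => false) (fun _ next => refuteStep T full next) fuel

/-- The coloring `f` uses, at each vertex, a color allowed by the masks, and `u` is a set of
vertices. -/
def Allowed (n : ℕ) (f : ℕ → Fin 4) (a b c d u : ℕ) : Prop :=
  u < 2 ^ n ∧ ∀ v < n, (![a, b, c, d] (f v)).testBit v = true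

/-- The coloring `f` is allowed by one of the pending states. -/
def PendingStates.Allows (n : ℕ) (f : ℕ → Fin 4) : PendingStates → Prop
  | .nil => False
  | .cons a b c d u rest => Allowed n f a b c d u ∨ rest.Allows n f

section Allowed

variable {n : ℕ} {f : ℕ → Fin 4} {a b c d u : ℕ}

theorem Allowed.le_lor (h : Allowed n f a b c d u) :
    2 ^ n - 1 ≤ Nat.lor (Nat.lor a b) (Nat.lor c d) := by
  change 2 ^ n - 1 ≤ ((a ||| b) ||| (c ||| d))
  have : (2 ^ n - 1) &&& ((a ||| b) ||| (c ||| d)) = 2 ^ n - 1 := by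
    refine Nat.eq_of_testBit_eq fun v => ?_
    simp only [Nat.testBit_and, Nat.testBit_or, Nat.testBit_two_pow_sub_one]
    by_cases hv : v < n
    · have h₁ := h.2 v hv
      revert h₁
      generalize f v = k
      fin_cases k <;> simp +contextual [hv]
    · simp [hv]
  rw [← this]
  exact Nat.and_le_right

theorem Allowed.branch (h : Allowed n f a b c d u) (v : ℕ) :
    let bit := Nat.shiftLeft 1 v
    Allowed n f a (maskDiff b bit) (maskDiff c bit) (maskDiff d bit) u ∨
    Allowed n f (maskDiff a bit) b (maskDiff c bit) (maskDiff d bit) u ∨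
    Allowed n f (maskDiff a bit) (maskDiff b bit) c (maskDiff d bit) u ∨
    Allowed n f (maskDiff a bit) (maskDiff b bit) (maskDiff c bit) d u := by
  have key : ∀ w, f w ≠ f v → (Nat.shiftLeft 1 v).testBit w = false := fun w hw => by
    change (1 <<< v).testBit w = _
    rw [Nat.one_shiftLeft, Nat.testBit_two_pow, decide_eq_false_iff_not]
    rintro rfl
    exact hw rfl
  intro bit
  change ∀ w, f w ≠ f v → bit.testBit w = false at key
  clear_value bit
  revert key
  generalize f v = j
  intro key
  fin_cases j
  on_goal 1 => refine Or.inl ⟨h.1, fun w hw => ?_⟩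
  on_goal 2 => refine Or.inr (Or.inl ⟨h.1, fun w hw => ?_⟩)
  on_goal 3 => refine Or.inr (Or.inr (Or.inl ⟨h.1, fun w hw => ?_⟩))
  on_goal 4 => refine Or.inr (Or.inr (Or.inr ⟨h.1, fun w hw => ?_⟩))
  all_goals
    have h₁ := h.2 w hw
    have h₂ := key w
    revert h₁ h₂
    generalize f w = k
    fin_cases k <;> simp +contextual [testBit_maskDiff]

theorem Allowed.propagate (h : Allowed n f a b c d u) {u' v row : ℕ} (hu : u' < 2 ^ n)
    (hrow : ∀ w < n, row.testBit w = true → f v ≠ f w) :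
    Allowed n f (if f v = 0 then maskDiff a row else a) (if f v = 1 then maskDiff b row else b)
      (if f v = 2 then maskDiff c row else c) (if f v = 3 then maskDiff d row else d) u' := by
  refine ⟨hu, fun w hw => ?_⟩
  have h₁ := h.2 w hw
  have h₂ := hrow w hw
  revert h₁ h₂
  generalize f v = i
  generalize f w = j
  fin_cases i <;> fin_cases j <;> simp +contextual [testBit_maskDiff]

theorem testBit_atLeastTwo (v : ℕ) : (atLeastTwo a b c d).testBit v =
    ((a.testBit v && b.testBit v || c.testBit v && d.testBit v) ||
      (a.testBit v || b.testBit v) && (c.testBit v || d.testBit v)) := by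
  change (((a &&& b) ||| (c &&& d)) ||| ((a ||| b) &&& (c ||| d))).testBit v = _
  simp only [Nat.testBit_and, Nat.testBit_or]

theorem beq_land_two_pow (m v : ℕ) : Nat.beq (Nat.land m (2 ^ v)) 0 = !m.testBit v := by
  rw [Bool.eq_iff_iff, Nat.beq_eq]
  change m &&& 2 ^ v = 0 ↔ _
  rw [Nat.and_two_pow]
  cases m.testBit v <;> simp

theorem not_allowed_of_propagate {T v : ℕ} {next : Search} {rest : PendingStates} {hints : ℕ}
    (hf : v < n → ∀ w < n, (matrixRow T (2 ^ v)).testBit w = true → f v ≠ f w)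
    (hnext : ∀ {a b c d u rest hints}, next a b c d u rest hints = true →
      ¬ Allowed n f a b c d u ∧ ¬ rest.Allows n f)
    (hu : u.testBit v = true) (hv : (atLeastTwo a b c d).testBit v = false)
    (h : _root_.propagate T next a b c d rest hints (2 ^ v) (Nat.xor u (2 ^ v)) = true) :
    ¬ Allowed n f a b c d u ∧ ¬ rest.Allows n f := by
  simp only [_root_.propagate, force_eq, beq_land_two_pow] at h
  have key : Allowed n f a b c d u → (![a, b, c, d] (f v)).testBit v = true ∧
      Allowed n f (if f v = 0 then maskDiff a (matrixRow T (2 ^ v)) else a)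
        (if f v = 1 then maskDiff b (matrixRow T (2 ^ v)) else b)
        (if f v = 2 then maskDiff c (matrixRow T (2 ^ v)) else c)
        (if f v = 3 then maskDiff d (matrixRow T (2 ^ v)) else d) (Nat.xor u (2 ^ v)) := by
    intro hA
    have hvn : v < n := by
      by_contra hvn
      have : u < 2 ^ v := hA.1.trans_le (Nat.pow_le_pow_right two_pos (not_lt.mp hvn))
      rw [Nat.testBit_lt_two_pow this] at hu
      cases hu
    exact ⟨hA.2 v hvn, hA.propagate
      (Nat.xor_lt_two_pow hA.1 (Nat.pow_lt_pow_right one_lt_two hvn)) (hf hvn)⟩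
  rw [testBit_atLeastTwo] at hv
  revert h key hv
  generalize f v = i
  cases ha : a.testBit v <;> cases hb : b.testBit v <;> cases hc : c.testBit v <;>
    cases hd : d.testBit v <;> fin_cases i <;> simp [ha, hb, hc, hd] <;> intro h h'
  all_goals
    first
    | exact ⟨fun hA => (hnext h).1 (h' hA), (hnext h).2⟩
    | exact ⟨h', (hnext h).2⟩

theorem not_allowed_of_refute {T : ℕ}
    (hf : ∀ v < n, ∀ w < n, (matrixRow T (2 ^ v)).testBit w = true → f v ≠ f w) {fuel : ℕ}
    {rest : PendingStates} {hints : ℕ}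
    (h : refute T (2 ^ n - 1) fuel a b c d u rest hints = true) :
    ¬ Allowed n f a b c d u ∧ ¬ rest.Allows n f := by
  induction fuel generalizing a b c d u rest hints with
  | zero => cases h
  | succ k ih =>
    change refuteStep T _ (refute T _ k) a b c d u rest hints = true at h
    rw [refuteStep, force_eq] at h
    cases hfull : Nat.ble (2 ^ n - 1) (Nat.lor (Nat.lor a b) (Nat.lor c d)) with
    | false =>
      rw [hfull, cond_false] at h
      refine ⟨fun hA => ?_, ?_⟩
      · rw [Nat.ble_eq_true_of_le hA.le_lor] at hfull
        cases hfull
      · cases rest with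
        | nil => exact id
        | cons a b c d u rest => exact not_or.mpr (ih h)
    | true =>
      rw [hfull, cond_true, propagateOrBranch] at h
      cases hbit : Nat.beq (lowBit (maskDiff u (atLeastTwo a b c d))) 0 with
      | true =>
        rw [hbit, cond_true] at h
        simp only [_root_.branch, force_eq] at h
        have h' := ih h
        simp only [PendingStates.Allows, not_or] at h'
        refine ⟨fun hA => ?_, h'.2.2.2.2⟩
        rcases hA.branch (Nat.land hints 511) with hA | hA | hA | hA
        exacts [h'.1 hA, h'.2.1 hA, h'.2.2.1 hA, h'.2.2.2.1 hA]
      | false =>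
        rw [hbit, cond_false, force_eq] at h
        obtain ⟨v, hv, e⟩ := exists_lowBit_eq (N := maskDiff u (atLeastTwo a b c d)) (by
          intro h0
          rw [h0] at hbit
          cases hbit)
        rw [e] at h
        rw [testBit_maskDiff, Bool.and_eq_true, Bool.not_eq_true'] at hv
        exact not_allowed_of_propagate (hf v) ih hv.1 hv.2 h

end Allowed

/-- The adjacency matrix, in the format of `matrixRow`, of the graph with the given edges. -/
def edgeMatrix (edges : List (ℕ × ℕ)) : ℕ :=
  edges.foldr (fun e T => Nat.lor T (Nat.lor
    (Nat.shiftLeft 1 (Nat.add (Nat.mul 512 (Nat.mod (Nat.pow 2 e.1) 347)) e.2))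
    (Nat.shiftLeft 1 (Nat.add (Nat.mul 512 (Nat.mod (Nat.pow 2 e.2) 347)) e.1)))) 0

theorem testBit_matrixRow (T bit w : ℕ) :
    (matrixRow T bit).testBit w = (decide (w < 512) && T.testBit (512 * (bit % 347) + w)) := by
  change ((T >>> (512 * (bit % 347))) % 2 ^ 512).testBit w = _
  rw [Nat.testBit_mod_two_pow, Nat.testBit_shiftRight]

theorem orderOf_two_zmod : orderOf (2 : ZMod 347) = 346 := by
  have : Fact (Nat.Prime 347) := ⟨by norm_num⟩
  refine orderOf_eq_of_pow_and_pow_div_prime (by norm_num) (by decide +kernel) fun p hp hd => ?_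
  have hd' : p ∣ 2 * 173 := hd
  rcases (hp.dvd_mul).mp hd' with h | h
  · rw [(Nat.prime_dvd_prime_iff_eq hp Nat.prime_two).mp h]
    decide +kernel
  · rw [(Nat.prime_dvd_prime_iff_eq hp (by norm_num)).mp h]
    decide +kernel

theorem two_pow_mod_injOn {v w : ℕ} (hv : v < 346) (hw : w < 346)
    (h : 2 ^ v % 347 = 2 ^ w % 347) : v = w := by
  have h' : ((2 ^ v : ℕ) : ZMod 347) = (2 ^ w : ℕ) := (ZMod.natCast_eq_natCast_iff' _ _ _).mpr h
  push_cast at h'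
  exact pow_injOn_Iio_orderOf (by simpa [orderOf_two_zmod] using hv)
    (by simpa [orderOf_two_zmod] using hw) h'

theorem mem_of_testBit_edgeMatrix {edges : List (ℕ × ℕ)}
    (hedges : ∀ e ∈ edges, e.1 < 346 ∧ e.2 < 346) {v w : ℕ} (hv : v < 346)
    (h : (matrixRow (edgeMatrix edges) (2 ^ v)).testBit w = true) :
    (v, w) ∈ edges ∨ (w, v) ∈ edges := by
  rw [testBit_matrixRow, Bool.and_eq_true, decide_eq_true_eq] at h
  obtain ⟨hw, h⟩ := h
  induction edges with
  | nil => simp [edgeMatrix] at h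
  | cons e edges ih =>
    rw [List.forall_mem_cons] at hedges
    change (edgeMatrix edges ||| (1 <<< (512 * (2 ^ e.1 % 347) + e.2) |||
      1 <<< (512 * (2 ^ e.2 % 347) + e.1))).testBit _ = true at h
    simp only [Nat.testBit_or, Nat.one_shiftLeft, Nat.testBit_two_pow, Bool.or_eq_true,
      decide_eq_true_eq] at h
    rcases h with h | h | h
    · exact (ih hedges.2 h).imp (List.mem_cons_of_mem _) (List.mem_cons_of_mem _)
    · have h₁ := two_pow_mod_injOn hv hedges.1.1 (by omega)
      have h₂ : w = e.2 := by omega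
      rw [h₁, h₂]
      exact Or.inl List.mem_cons_self
    · have h₁ := two_pow_mod_injOn hv hedges.1.2 (by omega)
      have h₂ : w = e.1 := by omega
      rw [h₁, h₂]
      exact Or.inr List.mem_cons_self

/-- The mask of the vertices `v < n` that may have the color `k`, given the colors of some
vertices. -/
def precoloredMask (n : ℕ) (l : List (ℕ × Fin 4)) (k : Fin 4) : ℕ :=
  l.foldr (fun x m => if x.2 = k then m else maskDiff m (2 ^ x.1)) (2 ^ n - 1)

theorem allowed_precoloredMask {n : ℕ} {f : ℕ → Fin 4} {l : List (ℕ × Fin 4)}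
    (hl : ∀ x ∈ l, f x.1 = x.2) :
    Allowed n f (precoloredMask n l 0) (precoloredMask n l 1) (precoloredMask n l 2)
      (precoloredMask n l 3) (2 ^ n - 1) := by
  refine ⟨Nat.sub_lt (by positivity) one_pos, fun v hv => ?_⟩
  have key : (precoloredMask n l (f v)).testBit v = true := by
    induction l with
    | nil => simp [precoloredMask, Nat.testBit_two_pow_sub_one, hv]
    | cons x l ih =>
      rw [List.forall_mem_cons] at hl
      change (if x.2 = f v then precoloredMask n l (f v)
        else maskDiff (precoloredMask n l (f v)) (2 ^ x.1)).testBit v = true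
      split_ifs with hx
      · exact ih hl.2
      · have hv' : x.1 ≠ v := by
          rintro rfl
          exact hx hl.1.symm
        simp [testBit_maskDiff, ih hl.2, hv']
  revert key
  generalize f v = k
  fin_cases k <;> exact id

/-- The points of the graph, in coordinates for `latticePoint`, grouped by the classes of a proper
4-coloring. -/
def colorClass : Fin 4 → List (ℕ × ℕ × ℕ × ℕ)
  | 0 =>
      [(1, 2, 9, 4), (0, 3, 8, 3), (2, 3, 8, 5), (2, 3, 10, 3), (4, 3, 6, 5), (4, 3, 10, 5),
       (4, 3, 12, 7), (6, 1, 12, 3), (6, 1, 16, 3), (6, 3, 6, 3), (7, 0, 5, 4), (7, 2, 13, 2),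
       (7, 4, 9, 4), (8, 1, 4, 5), (8, 1, 8, 1), (8, 1, 8, 5), (8, 1, 10, 7), (8, 1, 12, 1),
       (8, 1, 16, 5), (9, 0, 5, 6), (9, 0, 9, 6), (9, 2, 9, 0), (9, 4, 13, 6), (10, 1, 6, 5),
       (10, 1, 8, 7), (10, 1, 10, 1), (10, 1, 12, 3), (10, 1, 12, 7), (11, 2, 13, 2), (11, 2, 15, 4),
       (11, 4, 9, 4), (12, 1, 2, 3), (12, 1, 8, 5), (12, 1, 14, 3), (13, 2, 5, 4), (13, 2, 7, 6),
       (13, 2, 11, 2), (13, 2, 15, 2), (13, 2, 17, 4), (14, 1, 6, 5), (14, 1, 8, 7), (14, 1, 12, 7),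
       (14, 3, 14, 3), (15, 2, 5, 6), (15, 2, 7, 0), (15, 2, 9, 6), (15, 2, 11, 0), (15, 2, 11, 8),
       (15, 2, 13, 2), (16, 1, 4, 5), (16, 1, 8, 5), (16, 1, 10, 7), (16, 3, 12, 3), (16, 3, 14, 1),
       (17, 2, 3, 2), (17, 2, 5, 4), (17, 2, 11, 2), (17, 2, 15, 2), (17, 2, 17, 4), (18, 1, 6, 5),
       (18, 3, 2, 3), (18, 3, 14, 3), (18, 3, 18, 3), (18, 5, 8, 3), (19, 2, 3, 4), (19, 2, 7, 4),
       (19, 2, 9, 6), (19, 2, 11, 8), (20, 3, 6, 5), (20, 3, 8, 7), (20, 3, 10, 1), (20, 3, 12, 7),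
       (21, 2, 7, 6), (21, 2, 9, 8), (22, 3, 4, 5), (22, 3, 8, 5), (22, 3, 10, 7), (23, 0, 9, 4),
       (23, 2, 3, 4), (24, 1, 10, 3), (24, 3, 4, 3), (24, 3, 16, 3), (26, 1, 14, 5), (26, 3, 8, 5),
       (26, 3, 10, 7), (28, 1, 10, 3), (28, 1, 12, 5)]
  | 1 =>
      [(13, 2, 9, 4), (4, 3, 8, 7), (6, 1, 8, 3), (6, 3, 8, 5), (7, 0, 9, 4), (7, 4, 13, 4),
       (8, 1, 10, 3), (8, 1, 12, 5), (8, 3, 8, 7), (9, 2, 15, 6), (9, 4, 9, 6), (10, 1, 4, 7),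
       (10, 1, 6, 1), (10, 1, 8, 3), (10, 1, 10, 5), (10, 1, 14, 5), (11, 2, 7, 8), (11, 2, 9, 2),
       (11, 2, 11, 4), (11, 4, 5, 4), (12, 1, 6, 3), (12, 1, 10, 3), (12, 1, 12, 5), (13, 2, 5, 8),
       (13, 2, 7, 2), (13, 2, 11, 6), (13, 2, 13, 4), (13, 2, 15, 6), (13, 4, 3, 4), (14, 1, 4, 7),
       (14, 1, 6, 1), (14, 1, 14, 5), (15, 2, 1, 6), (15, 2, 9, 2), (15, 2, 11, 4), (15, 2, 13, 6),
       (15, 2, 17, 6), (15, 4, 7, 6), (16, 3, 6, 1), (16, 3, 14, 5), (17, 2, 7, 2), (17, 2, 9, 4),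
       (17, 2, 13, 4), (17, 2, 15, 6), (18, 3, 10, 3), (18, 3, 12, 5), (19, 0, 5, 4), (19, 2, 5, 2),
       (19, 2, 9, 2), (19, 2, 11, 4), (20, 3, 4, 7), (20, 3, 6, 1), (20, 3, 10, 5), (20, 3, 14, 5),
       (21, 0, 9, 6), (21, 0, 13, 6), (21, 2, 3, 6), (21, 2, 7, 2), (22, 1, 8, 7), (22, 3, 8, 1),
       (22, 3, 10, 3), (22, 3, 12, 5), (23, 4, 13, 4), (24, 3, 8, 3), (24, 3, 12, 3), (26, 1, 10, 5)]
  | 2 =>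
      [(7, 2, 15, 4), (29, 2, 9, 4), (0, 1, 10, 3), (3, 2, 5, 6), (4, 1, 4, 5), (4, 1, 6, 7),
       (4, 3, 14, 5), (5, 2, 11, 2), (5, 2, 13, 4), (6, 3, 10, 3), (6, 3, 14, 3), (7, 2, 3, 4),
       (7, 2, 9, 2), (7, 2, 11, 4), (8, 1, 6, 7), (8, 3, 6, 5), (8, 3, 8, 3), (8, 3, 10, 1),
       (8, 3, 14, 5), (9, 2, 3, 6), (9, 2, 7, 2), (9, 2, 7, 6), (9, 2, 9, 8), (10, 3, 4, 5),
       (10, 3, 6, 7), (10, 3, 8, 1), (10, 3, 10, 3), (10, 3, 12, 5), (10, 3, 14, 3), (10, 3, 16, 5),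
       (11, 0, 9, 4), (11, 2, 3, 4), (11, 4, 13, 4), (12, 1, 18, 3), (12, 3, 0, 3), (12, 3, 12, 3),
       (13, 0, 5, 2), (13, 0, 7, 4), (13, 0, 11, 4), (13, 4, 15, 4), (14, 1, 10, 5), (14, 1, 14, 1),
       (14, 3, 4, 5), (14, 3, 6, 7), (14, 3, 8, 1), (14, 3, 10, 3), (15, 0, 11, 6), (15, 4, 15, 6),
       (16, 1, 4, 1), (16, 1, 6, 3), (16, 1, 10, 3), (16, 1, 12, 5), (16, 1, 14, 7), (16, 3, 4, 7),
       (16, 3, 8, 7), (17, 0, 7, 4), (17, 0, 11, 4), (17, 4, 11, 4), (17, 4, 15, 4), (18, 1, 4, 3),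
       (18, 1, 8, 3), (18, 1, 10, 5), (19, 0, 9, 4), (19, 4, 13, 4), (20, 1, 8, 5), (20, 1, 12, 5),
       (21, 2, 9, 4), (21, 2, 11, 6), (21, 2, 15, 6), (21, 4, 5, 6), (22, 1, 6, 1), (22, 1, 8, 3),
       (22, 1, 10, 5), (22, 1, 12, 7), (22, 1, 14, 5), (23, 2, 5, 2), (23, 2, 7, 4), (23, 2, 11, 4),
       (24, 1, 6, 3), (25, 2, 9, 4), (25, 2, 11, 6), (26, 3, 12, 5), (27, 2, 13, 6), (28, 3, 10, 5)]
  | 3 =>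
      [(2, 1, 10, 5), (3, 2, 9, 6), (3, 2, 13, 6), (4, 1, 10, 7), (4, 1, 12, 5), (5, 2, 5, 4),
       (5, 2, 7, 2), (5, 2, 9, 4), (5, 2, 11, 6), (6, 1, 4, 3), (7, 2, 5, 2), (7, 2, 7, 4),
       (8, 3, 10, 5), (8, 3, 12, 7), (9, 2, 9, 4), (9, 2, 11, 6), (10, 3, 8, 5), (10, 3, 10, 7),
       (10, 3, 14, 7), (11, 0, 13, 4), (11, 2, 5, 2), (11, 2, 7, 4), (11, 2, 9, 6), (12, 3, 4, 3),
       (12, 3, 8, 3), (12, 3, 10, 5), (12, 3, 16, 3), (13, 0, 15, 4), (13, 2, 3, 2), (13, 4, 7, 4),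
       (13, 4, 13, 2), (14, 3, 4, 1), (14, 3, 8, 5), (14, 3, 10, 7), (14, 3, 12, 1), (14, 3, 12, 5),
       (14, 3, 14, 7), (15, 0, 3, 6), (15, 0, 7, 6), (15, 4, 11, 6), (16, 1, 6, 7), (16, 1, 12, 1),
       (16, 1, 14, 3), (16, 3, 6, 5), (16, 3, 8, 3), (16, 3, 10, 5), (16, 3, 12, 7), (17, 0, 3, 4),
       (17, 0, 13, 2), (17, 4, 5, 2), (17, 4, 7, 4), (18, 1, 0, 3), (18, 1, 12, 3), (18, 1, 16, 3),
       (18, 3, 6, 3), (18, 3, 8, 5), (19, 2, 13, 2), (19, 2, 15, 4), (19, 4, 9, 4), (20, 1, 4, 5),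
       (20, 1, 6, 7), (20, 1, 8, 1), (20, 1, 10, 7), (20, 1, 12, 1), (20, 1, 16, 5), (21, 2, 9, 0),
       (21, 4, 9, 6), (22, 1, 6, 5), (22, 1, 12, 3), (23, 2, 7, 8), (23, 2, 9, 2), (23, 2, 13, 2),
       (23, 2, 15, 4), (23, 4, 5, 4), (23, 4, 9, 4), (24, 1, 14, 3), (25, 2, 5, 4), (25, 2, 11, 2),
       (25, 2, 13, 4), (26, 1, 8, 7), (27, 2, 5, 6), (27, 2, 9, 6)]

/-- The vertices of the graph, in coordinates for `latticePoint`. -/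
def vertices : List (ℕ × ℕ × ℕ × ℕ) :=
  colorClass 0 ++ (colorClass 1 ++ (colorClass 2 ++ colorClass 3))

/-- For each vertex, its neighbors of smaller index in `vertices`. -/
def smallerNeighbors : List (ℕ × List ℕ) :=
  [(87, [0, 13, 24, 25, 51, 61, 64]), (88, [0, 12, 22]), (89, [9, 20, 21, 28, 31, 33, 50]),
   (91, [24, 25, 33]), (92, [2, 6]), (93, [34, 37]), (94, [28, 35, 38, 39]), (95, [16, 30, 69]),
   (96, [5, 8, 22, 33, 45]), (98, [10, 34, 45, 51]), (99, [10, 34, 46]), (100, [35, 48]),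
   (101, [36, 43, 49]), (102, [11, 37, 45, 50]), (103, [15, 39, 72]), (104, [0, 15, 53, 54, 57]),
   (105, [8, 9, 16, 17, 30, 41, 55, 58]), (107, [7, 19, 43, 44, 56]),
   (108, [8, 10, 20, 21, 45, 46, 55, 57, 79]), (109, [47, 48, 58, 59]), (110, [16, 23, 49, 67]),
   (111, [11, 17, 23, 50, 60]), (112, [18, 26, 52, 59]), (113, [15, 27, 53, 62, 65]),
   (114, [16, 66]), (115, [12, 34, 63]), (116, [16, 20, 55, 66]), (117, [17, 55]),
   (118, [15, 20, 28, 57, 66, 82]), (119, [23, 31, 60, 68, 72]), (120, [32]), (121, [23, 68]),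
   (122, [24, 33, 61, 69, 72]), (123, [27, 62, 71]), (124, [22, 43, 45, 63, 71]),
   (125, [9, 34, 65]), (126, [30, 37, 75]), (127, [28, 31, 39, 68]),
   (128, [29, 33, 40, 69, 70, 74, 78]), (129, [11, 32, 41, 71, 75]), (130, [42, 76]),
   (131, [34, 37, 45, 46, 63, 80, 81]), (132, [35, 38, 47, 48]), (133, [10, 19, 64, 65, 79]),
   (134, [36, 49, 74, 79]), (135, [21, 37, 42, 50, 75, 80]), (136, [34, 38, 39, 51, 76, 81]),
   (137, [45, 55, 78, 84]), (138, [46, 55]), (139, [43, 56]), (140, [45, 57, 83]),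
   (141, [20, 49, 72, 79, 82]), (142, [50]), (143, [45, 50, 60, 80, 83]), (144, [48, 52, 59]),
   (145, [24, 32, 65, 76]), (146, [53, 54, 65]), (147, [55, 57, 66]), (148, [58, 67]),
   (149, [62, 63, 71]), (150, [60, 61, 64, 72, 79]), (151, [62, 65, 79]), (152, [51, 83]),
   (153, [0, 3, 57, 87, 92, 108, 130]), (154, [66, 78, 80, 84, 128, 135]),
   (155, [1, 8, 25, 101, 108]), (156, [9, 16, 34, 43, 110]), (157, [4, 20, 49, 101, 116]),
   (158, [10, 27, 39, 88]), (159, [11, 42, 97, 126]), (160, [46, 56, 94, 99, 121]),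
   (161, [1, 17, 48, 100, 122, 129]), (162, [7, 21, 29, 89, 97, 106, 131]),
   (163, [0, 1, 7, 8, 22, 30, 53, 61, 96, 104, 126]), (164, [0, 2, 10, 32, 54, 64, 87, 98]),
   (165, [5, 33, 37, 101, 128, 135]), (166, [6, 12, 25, 27, 34, 38, 56, 91, 92, 107, 136]),
   (167, [41, 59, 95, 112]), (168, [13, 15, 68, 103, 112]), (169, [42, 93, 113, 115]),
   (170, [14, 17, 30, 37, 70, 105, 131]), (171, [2, 18, 28, 61, 87, 94, 140]),
   (172, [19, 31, 40, 45, 64, 88, 143]), (173, [32, 48, 65, 90, 144]),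
   (174, [6, 9, 19, 20, 41, 65, 72, 89, 97, 107, 119, 122]), (175, [32, 66, 73, 90, 116]),
   (176, [5, 23, 45, 74, 110, 137]), (177, [6, 24, 34, 47, 68, 98, 119]),
   (178, [1, 12, 25, 48, 53, 87, 99, 146]), (179, [26, 70, 100, 112, 139, 147]),
   (180, [4, 11, 36, 71, 101, 102, 123, 124, 148]), (181, [26, 114, 120, 140]),
   (182, [5, 37, 102, 121]), (183, [14, 16, 40, 49, 77, 105, 141]),
   (184, [50, 78, 89, 90, 106, 116, 128, 143]), (185, [29, 90, 105, 149]),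
   (186, [7, 11, 123, 129]), (187, [9, 31, 55, 119]),
   (188, [9, 22, 33, 46, 58, 62, 108, 122, 127, 148, 151]), (189, [23, 49, 93, 111]),
   (190, [24, 34, 87, 94, 99]), (191, [10, 18, 25, 27, 51, 59, 87, 113, 133]),
   (192, [12, 38, 53, 113, 131]), (193, [13, 18, 19, 56, 79, 96, 104, 133, 152]),
   (194, [14, 21, 29, 129, 135]), (195, [39, 54, 66, 80, 97, 139]),
   (196, [4, 40, 55, 67, 71, 106, 116]), (197, [30, 117, 128, 150]), (198, [3, 5, 134]),
   (199, [19, 23, 45, 108, 122]), (200, [61, 97, 122, 123, 139]),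
   (201, [25, 34, 64, 104, 125, 133]), (202, [26, 35, 105]), (203, [29, 52, 66, 85, 112, 152]),
   (204, [7, 23, 36, 67, 72, 86, 126]), (205, [24, 73, 82, 113, 141, 145]),
   (206, [34, 64, 73, 76, 115]), (207, [51, 65, 83, 87, 88, 90, 143]),
   (208, [31, 40, 55, 109, 117, 128]), (209, [41, 107, 128, 129]),
   (210, [70, 71, 106, 128, 129]), (211, [30, 58, 129, 147]),
   (212, [13, 43, 60, 77, 79, 87, 108, 143]),
   (213, [14, 15, 31, 33, 44, 45, 72, 78, 89, 113, 131, 141]),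
   (214, [16, 34, 47, 73, 85, 93, 114, 120, 132]), (215, [20, 51, 65, 91, 118, 136, 145]),
   (216, [22, 53, 92, 136, 150]), (217, [15, 24, 68, 82, 100, 118, 122, 127, 139]),
   (218, [26, 27, 39, 56, 94, 123, 139, 140]), (219, [49, 82, 104, 126]),
   (220, [43, 79, 105, 123, 131, 141, 142, 151]), (221, [29, 45, 51, 61, 81, 84, 96, 142, 152]),
   (222, [72, 80, 84, 106, 143]), (223, [56, 65, 99, 107, 133, 146]),
   (224, [32, 54, 66, 100, 129, 147]), (225, [49, 55, 67, 75, 101, 108, 130, 135, 148]),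
   (226, [27, 76, 109, 136]), (227, [33, 50, 102, 128, 148]), (228, [34, 56, 68, 85, 131]),
   (229, [35, 60, 69, 77, 86, 111, 129, 132, 138]),
   (230, [36, 55, 58, 59, 70, 71, 77, 84, 105, 112, 149]),
   (231, [39, 72, 80, 107, 117, 136, 150]), (232, [45, 64, 76, 87, 120, 140, 145, 146]),
   (233, [47, 68, 85, 112, 121, 147]), (234, [52, 68, 72, 82, 152]),
   (235, [72, 75, 122, 129, 145, 151]), (236, [74, 86, 131]),
   (237, [2, 10, 13, 18, 108, 153, 160, 193]),
   (238, [1, 13, 45, 87, 89, 96, 155, 162, 171, 172]), (239, [7, 15, 95, 113, 122, 163, 174]),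
   (240, [0, 6, 19, 51, 88, 91, 96, 98, 166, 193]), (241, [5, 11, 23, 41, 159, 174, 204]),
   (242, [43, 55, 101, 105, 155, 167, 179]), (243, [2, 15, 26, 28, 44, 127, 168]),
   (244, [14, 16, 29, 45, 95, 102, 120, 128, 170, 176, 181, 184]),
   (245, [3, 23, 47, 93, 121, 177, 182]),
   (246, [0, 9, 19, 49, 104, 108, 155, 156, 172, 183, 201, 212]),
   (247, [3, 4, 23, 36, 55, 108, 134, 157, 176, 187]),
   (248, [10, 12, 24, 31, 65, 88, 91, 99, 109, 113, 127, 158, 177, 178, 188]),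
   (249, [15, 34, 94, 104, 114, 131, 139, 156, 160, 192, 195]),
   (250, [16, 35, 71, 105, 132, 161, 185, 196]), (251, [42, 66, 118, 135, 157, 159, 195, 219]),
   (252, [4, 7, 20, 22, 39, 43, 67, 97, 108, 123, 136, 156, 158, 162, 188, 196, 220]),
   (253, [1, 23, 69, 75, 101, 111, 122, 126, 159, 161, 165]),
   (254, [12, 24, 27, 43, 76, 87, 139, 166, 200, 206]),
   (255, [27, 45, 88, 92, 113, 140, 153, 192, 207]),
   (256, [17, 29, 41, 50, 89, 105, 142, 194, 208]),
   (257, [13, 39, 56, 160, 162, 168, 195, 203, 228]),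
   (258, [7, 14, 30, 40, 52, 72, 95, 106, 117, 129, 144, 161, 167, 183, 196, 197, 204, 229]),
   (259, [0, 49, 73, 93, 126, 130, 169, 198, 205, 206, 219]),
   (260, [12, 31, 43, 74, 80, 107, 128, 131, 162, 165, 172]),
   (261, [1, 2, 11, 21, 44, 45, 54, 60, 61, 75, 92, 97, 107, 108, 124, 129, 146, 150, 163, 164, 174]),
   (262, [3, 32, 47, 55, 76, 109, 120, 130, 147, 153, 175, 211]),
   (263, [33, 56, 81, 96, 123, 131, 162, 166, 186, 200, 210]),
   (264, [38, 91, 93, 113, 205, 214, 215]), (265, [14, 49, 78, 135, 165, 169, 176, 189, 213]),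
   (266, [34, 60, 87, 92, 125, 132, 177, 178, 207, 216]),
   (267, [36, 37, 62, 63, 126, 149, 169, 180]), (268, [21, 55, 70, 80, 106, 117, 135, 170, 184]),
   (269, [2, 22, 39, 64, 83, 88, 103, 104, 127, 140, 150, 171, 172, 193, 216]),
   (270, [5, 30, 40, 41, 84, 96, 105, 128, 137, 210]),
   (271, [105, 129, 138, 151, 173, 185, 194, 210]),
   (272, [6, 28, 56, 65, 68, 118, 151, 168, 174, 193, 234]),
   (273, [29, 41, 66, 69, 95, 97, 129, 159, 175, 185, 211]),
   (274, [20, 24, 31, 43, 119, 141, 212, 217]), (275, [27, 43, 45, 107, 142, 213, 218]),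
   (276, [45, 68, 122, 131, 177, 182, 188, 222]),
   (277, [27, 34, 65, 133, 158, 190, 206, 207, 220, 226]),
   (278, [7, 53, 99, 113, 136, 144, 191, 223]), (279, [52, 82, 100, 104, 114, 183, 219, 224]),
   (280, [4, 9, 49, 50, 105, 110, 111, 134, 148, 180, 220]),
   (281, [28, 35, 66, 83, 90, 181, 184, 185, 202, 203]),
   (282, [5, 29, 36, 50, 67, 74, 84, 106, 135, 162, 176, 182, 204, 221, 222, 236]),
   (283, [6, 51, 72, 103, 113, 136, 177, 205, 216, 234]), (284, [32, 55, 77, 116, 183, 224]),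
   (285, [56, 57, 118, 186, 218, 224]), (286, [54, 68, 127, 147, 187, 195]),
   (287, [55, 69, 128, 138, 148, 149, 185, 188, 196, 197]),
   (288, [34, 60, 107, 119, 189, 228, 231]),
   (289, [7, 17, 38, 46, 61, 86, 94, 107, 111, 122, 131, 142, 186, 190, 199, 220, 229, 231]),
   (290, [8, 18, 36, 61, 62, 79, 108, 123, 191, 221, 230]),
   (291, [9, 36, 43, 44, 63, 72, 124, 151, 168, 187, 188, 212, 213, 222, 230]),
   (292, [59, 73, 78, 90, 95, 113, 115, 120, 144, 149, 169, 214]),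
   (293, [11, 111, 126, 148, 150, 197, 204, 227]),
   (294, [53, 79, 87, 96, 153, 193, 198, 205, 216, 232]),
   (295, [12, 42, 65, 76, 80, 97, 115, 136, 146, 192, 195, 207]),
   (296, [13, 45, 54, 68, 98, 152, 193, 228, 232]),
   (297, [23, 41, 47, 55, 69, 119, 137, 167, 199, 208, 229, 233]),
   (298, [14, 48, 70, 77, 100, 128, 138, 194, 208, 229]),
   (299, [16, 43, 69, 71, 77, 101, 116, 128, 209, 230]),
   (300, [17, 26, 44, 70, 117, 129, 209, 230]), (301, [18, 57, 121, 140, 152, 193, 199, 233]),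
   (302, [21, 53, 79, 104, 131, 150, 201, 213]),
   (303, [30, 63, 72, 97, 126, 131, 150, 200, 206, 220]),
   (304, [23, 74, 75, 86, 107, 134, 204, 209]), (305, [26, 58, 109, 127, 147, 202, 208, 233]),
   (306, [35, 68, 83, 103, 217]), (307, [54, 57, 61, 83, 87, 104, 139, 152, 212, 217]),
   (308, [28, 62, 82, 113, 127, 140, 213, 218, 234]),
   (309, [29, 37, 85, 114, 128, 131, 149, 154, 214, 236]),
   (310, [78, 106, 131, 137, 138, 210, 229, 236]), (311, [30, 61, 69, 70, 84, 211, 229, 230]),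
   (312, [33, 81, 118, 135, 142, 151, 154, 194, 213, 215, 221, 235]),
   (313, [34, 43, 136, 139, 223]), (314, [36, 46, 86, 121, 134, 138, 148, 225, 236]),
   (315, [48, 65, 113, 122, 217, 226]), (316, [40, 50, 77, 84, 142, 143, 154, 229]),
   (317, [43, 55, 76, 80, 220, 225, 231]), (318, [45, 74, 79, 128, 143, 150, 221, 227])]

/-- The edges of the graph, as pairs of indices in `vertices`. -/
def edges : List (ℕ × ℕ) :=
  smallerNeighbors.flatMap fun x => x.2.map fun w => (x.1, w)

/-- The branching vertices for `refute`, when the vertices `128` and `131` have the colors `i` and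
`j`: they are the base-512 digits of the number with these digits in base `10 ^ 90`. -/
def branchingVertices : Fin 4 → Fin 4 → List ℕ
  | 1, 0 =>
    [572685709028072217016234037256282432709354806002713339408408930199084694571134457038113325,
     216796286861687815989444437056196626340968734545322656633798638333558799749071380777526201,
     786881218740822701257256107482797072100360239736353718489938420837848062278329340752109513,
     113378002723429344427642510607258513024879856218729365410050474203698109404018593046453139,
     948090922523111233964615335349262301998297275872268989265892544205650575706685257007378509,
     356275684248582287671844632412715903357697671926862486775045417045461480293335039222182526,
     328412844828366595561715300862754791098146051222733776547353962339940665456420118081176253,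
     11014236436238070999869969552571971197830448382674172144051072860944980176033815636921344,
     576511620244240263030969991636549239076204951118221746883036848566774098046184258353581006,
     659147850673126325480848713390765694407488414402540420295916168446380134497682458481139842,
     799088653879163636049278517371494672497163545550853066790327413918245768184580361817335439,
     606508630020977208451750743638125090595287150777567127242476081051581955174350622134395062,
     788561896485604132541022740564881510608315874936368373019366396395960325757799655065608745,
     360020260121476037597833968237026713482886355533621933565529770095557576346412844956900720,
     272072428684939752222404104343721277212449035723713633008368513687853423766585772894231826,
     458077220161655290658103625811206139093281559893076625766817783655397234199079928215456527,
     946841642737954208893670189032733291686504707440672596791478100676275146763348025786510957,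
     415140813356744823698321171169967881045441559293143331793602290628264399607542486562012201,
     191058101819230344620350389426969864361892102769599153504340419862184744893824901379775677,
     930562133568647905114193252892205842712069291752247680434868743660906955521557290193527765,
     630986221873147787093744930428264885839962682016714751719690249854246785590595604764761929,
     794772912536353238747326100509350810525347488281140798716295547301057847470362265189939084,
     44835785590216003728757890151802139491327444389794016115281166547826882824239252399687573,
     464516299410417768801625731163149273844136791857113535670768264435867843486]
  | 1, 1 =>
    [59018111133608211478122315347793427098215332820334937842877345108456788114214010739886637,
     590077463906483034351203846077286074078308070658771027316625441973752004879402712733163788,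
     770731941775783631841206985505250996919744958695228253042859824810157351206712161423078519,
     527342826792230876051999532840407171776666975991235925156464941135014285932482344667598657,
     364327758332529160802627026549603412470416528135209596228849443454677150872052849724475226,
     320815491550826111268356668515063325065463859163272975678600097356377426448960987132388157,
     851791586358293643117904872028579562803576101406571821399697987300182496608789878714772765,
     190639113951543331259255743588356329888376671670532947311779208404596955782813053195297961,
     194178445213967285147362138228377748353668542648326678841084601827942103423303162861236811,
     323771467175777276955598812342616055696819213253420818559764374063771665989283131490645447,
     851477246618340717148040946660305173673649221248422009584823357977688585814182645653271491,
     164974361307475222092656053117012253496497543139869546323197822480913796140561365127360136,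
     363160647411458329805810339784893706245830815682140545796648574767297372226096647672324451,
     832466354967032306400917532803304816584585749057705144140780957847296972670758167557664790,
     4249909031603567223655245466569436519369493304223302042657952751267233109303590166134826,
     304673587367421035321719078706305933061084019867290861940760620881846882565204146193485488,
     151765793652305335986482278049357698143718554563416436448084421206513761099862474121199954,
     270257011349073816470282896166556722719325429772668796524563153529992871966699118662685578,
     954284327402106144436681235609693471379158030626458238563057907413006729449808766288245206,
     231913103435758687793805752660982724128785913765859320642808130219418898245004582011899922,
     541245242493208365381663109077152909174100804769531163599202930678150308203756468160010840,
     429180986501459952646337642370475155248857838665845020572129544944237036351959190162499605,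
     740220582626330702898711182093264498770702934303198279342057736938111241889101137694353832,
     45060025183946848278612856997592758152858531729592906019847914637074866968459812578181956,
     798318367599778727735223917741555471268193078548967254671012752028648582475015115694076037,
     143855104326723715890498600432709989237]
  | 1, 2 =>
    [168446784576632989447700993293100819220456806317174413691945758156213726487941070257009799,
     88426155236746021657206252851105550476553809426645563654809667714211208361940868291386979,
     296819954976082547254368077616200619235074182301255448713152545661958774924649955326222656,
     9274069893747724363856430878317624109980748134672937019512309123785357284587306639008355,
     281782313828098020009997306604325080448261102898217583406731944895288842538225842059870660,
     646167491725481527773915325886678621034682368487694888524067357147994700277727700579460600,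
     883924209916389310649485858691601113764698613128165618041267359331050341478208145657372084,
     916917253143983788489991062141100594820667692402506528569932179175319318309961564833098230,
     869689554281427903815749225740405605095597068570729556088046190479328889169808898967693872,
     128105492364712377192240152528697442270669450432124667740827299757057803307960077311971831,
     937484900503177263220711533118765459682501513931874779347306922993688915271509351413550299,
     862946373105450061147959493637558577705300479531065131776508338538758149476829370628995316,
     653513755881499288017359787341554562237431580238591352902601343477168729290835520166274858,
     713561559020041339990544302226303223477657773924461510387561090726569234311634489364218875,
     486581613252591332294200079087695034687456392798039756843378301465438532063777835758672860,
     665231178783839286006919917293021653912422373618118721180487064254081579434631049370334738,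
     176273940174005528262318970728711370946407808075548543286009680946925759303784264699620923,
     670575433137267531284470454665668611140939219652750496959073290136395282024896525509108977,
     364684666418606261246400185265077914221484059175977534332276048242556800469754364863483517,
     469513262581226874760699701589613927772656618523813544737576711864528726861983621387040899,
     154619981776584247972399518215338052119678476489015681273946862681943283276662979078044703,
     926701638899928135318431526444316535925459642681623858301590750554319538603983725070583922,
     657945593905227228939601990028698566132117413784450877940703658811884930693419789432669386,
     1066750127818813938210490231916708357964266459777]
  | 1, 3 =>
    [6944610782039174535761526818062971761593710602454302510043518544695012395882074166670471,
     432366372298513160124356029916656469451853953519308287991654140840328197658325421320351944,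
     3900441841864659423714583020547597070910130577656733624176316885704755642466540621792335,
     13795411750407197497486097778035548293854030810043390894599325766363927974697938733020882,
     594706430416414880751388053187473196934334126686456170519935014352024087794694992428944598,
     203805579946937300559178730858494325513034376763230424057413996205925930880928268423598540,
     897024250784163996112456634656436003259899432535872950011613810800891903523286660837593272,
     15183963543059900222272223833426888702983311191754764637188328916376472898968450447224815,
     239017050495742623757166719429211550583283461841106888709618508118988485761760318343854847,
     937313007827196858599009769608318702360002422180791079572166211313165529478280354919978366,
     931509660051458616390298058712338224130923243623057216602515626827144760303585001418475678,
     2429910980879526562841209185082509012663122631921334303865233]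
  | 2, 0 =>
    [200610597933514043535057663040851876863395064041143288996293558240712167617211231038736941,
     360033757457520428557743302915681698118676618888245001787922269059179536890380207462390549,
     144772230023627029261153957276003457036602867781483338959770251964059777766846595151967987,
     562160674874806924152228218425155091613408844106913761302677252575283571402407851207809381,
     262916871266362196747180753659058830574375465200332305404910299798721862578357795204672144,
     889398981412111184426307548778806701628414260016326084703165679124965661450279009364316206,
     969304584344771538396718228208632924206706114157014305157077683283879758100732939793249842,
     513782934442575533712482187088476624122796881672609159628923366944293246453267863658515911,
     701702018429796854125142891679974888806379257207929561916560455477415716334439761188776622,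
     463053167543745832069984900770946719056656849708554479022290857593475732807802299890446439,
     606663110456100680210137870383206959509236427729203348708420372515717023218506845836917356,
     827470004911083633253007418616731005713330857458768385268064917086143308454378844806528921,
     298958643236946954211960338516412749365215528604456516161210837297164173223072807488485435,
     11540889925606950646296781970382052360205206]
  | 2, 1 =>
    [25120737652007412572911628237802934859891981745211850206868593393954890827880120456710279,
     586653362134616467864027214858907489755775139376326235324732107913129839176829837156551105,
     197140549434975972192219985868045741267516229318698487394900242915800701190524925385718274,
     696658052783696258025830256810516924975552435083272532165490143476323418175367238626715606,
     306087437678149724437329739293119477643057705228955084313466651245417316773554072114557010,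
     403928543923168452812954231247764257552318092104526125779654538663242943678606181079269735,
     704607712629621563663831912014624936251644171578127762711570311856312555192066642911749067,
     927379653171120484934059583186728161259292858612359526407365778223068932169077477702739749,
     401700682397708642453543417872249807627988809820061790116634247859764897321426183797589411,
     737059258529241961177341618986515509806849729987233385311140881617826674412549608131960208,
     723116006439993620155568916054470328353262281670987479464148055441032712965644073229446446,
     472571748376029141050945053750613017950389616012736116404037128983933424120260442641936975,
     970209608934980093978815467664348671260287908354902524439109029006731991385823247741995651,
     408712808940450886475263210310887523378369389252128392752688417763097578974848358351542519,
     520610640427313996643167724623516455092672033355518747713080577911546942498736504565623197,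
     451023247142825421473259063260807672886097810671475413970951755047478040982464471820681560,
     942583112583772379437356546223955848786468025956163224819133864024439524323852179006073532,
     411262200345542806196818857148070073028007886417700971915152600680977628426109872099547615,
     773957546951330172748744185115059483025632880120009935881338528215089844404522755931960203,
     928404450519063892878706463132275266063104859186]
  | 2, 2 =>
    [277974598151657393070400767657481285478279931265830959696341988981154141434090595636087341,
     332399860537479100451634471545145205089092757763677599703605431691700546487342451931003008,
     852979802588424545413550435118643126388020899516964627382908302494628510813795926918985164,
     762718916499761564055770289506639017358953852374403292660813624252692718351948816266498177,
     514353920904050690785808854922255053101797918341610070054451058115627092447247823269933265,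
     469604146986735860541736646642120156301364998969307450482728762144357694600805412116722723,
     394103697980529062436093546848452243444620623110168486250768628584196368831535447130766317,
     374005571136432338457799274708845389454476333057942462400113701374034827673244311254745028,
     244125687736701869163565140159499961422001544364313952924673935275630942331270984600349707,
     948660531720762196907055828776070867103150647448736152227999960187237494669304537764274681,
     143536106402237063768306635708490147950326129266446968420301284514954786096839967189377826,
     141046931694942298852927702658272016381860198279024303968355020984227895951387572574715866,
     703823211709810113800124971396922850841416915864515210003475613907520278662640833781042259,
     57596855190861703652016266138369595012664627225505192540366917383367400071771834850838877,
     549326372352835586481392619603106249828631304653334875768803515957427742969279346438439911,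
     137046713481234912237990958663236765529572113259106630531143493200295431336701650474131659,
     363086359920707910115246897267305514274382455213267519144366877754699174807101080456526574,
     846949171737342058594338395174292243284329267874706540818026883430525809931362081189621294,
     2968020922026631831499684124938329224239632467219249536644551045667922560050636776569335,
     19609]
  | 2, 3 =>
    [367285181457890911514942267413512951469918380368155624522577908032156969519540559873979527,
     341465716361558038832323233300542542038300850748934962416968618731254404676372696329709687,
     186793750163338196215324231905611974172817411473308408175163766326161414370018175669274118,
     890456436361875172936540162627906913175258212353388933157530758705777898072220064091960537,
     103126984157402749974112732672503414087930047823640601270960437693341932039486264641899474,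
     863282170109850168306783501288653743827906260568504042262991705461577600704326282832091352,
     577605489804474248627421202317229450751520166131506218884767282798861821251176993170430016,
     912188700415657569208280107704940115519095366124543889438946703298508224011929794700846608,
     896422652851095310858719877963458971396971534857574615580319821963813937200392760877327152,
     929289001823511802823448813583806681193849858580484202764918315345336756632272258898424994,
     4366470444705277704395833643613581326294057868089488710261831232677742]
  | 3, 0 =>
    [742425039147481180589423001275902924209422643238413748504836627323260057276030073289706029,
     757662379923114018035480863580063215341753989115670058986309364048279085869716174446684812,
     524376768036987587250710964029679058802706255703231878843525021524069383449363340790635028,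
     201466279239474673620601740279961672344592878269901426954346393414341135122371990269922580,
     54712143987080483596238768909140447366640782881934134018177558737306072937660904177800850,
     438740332556844280859034986639105394566715602386325686827897877838753040018528210552744754,
     623100713143373526828764817928715038487425368996835423182460500899814413889784928788767859,
     50061074967907431065733508666726947145038532680171416302733645330331832025036438079466969,
     294909853376106533332858716012894000106148509221609625819061092135970454190879611048191105,
     532769657707561618182326508184292438071868335058525336667489155579807735878179718464797565,
     621512370808217879524241170655616766853263733443114338266046319303491821879125172092129429,
     482979493016493476678006136785010819928695334452766082297391974547893655808975328572489056,
     928462977673110687491099366672000337150372490292639543683673002157124329706323944521767238,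
     908137405082305958792176455909175384590484706381729908813741851190857730228252803072]
  | 3, 1 =>
    [292646238959155228659250098530905439889393393247128504620077939212135022295591817462548615,
     528598784332788698118655589011480150053214733125956369093367034853651305266021936486197423,
     745048190444283814203536143466958781801081479018457958456282167534767681233065277869923634,
     467359094445359119348081921784345598258262743887792906872784884287360447111533206126064966,
     482253289188933316617108780591875965136853444413339797471870431673818648725358971822186239,
     938457982337244422157502723109339079499298251691673698176002610818184351765794847537701266,
     797124142361440558672643994853383107675511810904736263306503927087040879526294190234074118,
     443929646293413350103264981418413785104204440232231201937556128881130580465029675639818315,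
     114904726406015376980397322396901780318311725800888022346842573845654961213395046915224580,
     797020082758661180570525608675595485270721504152885811727684093250618388485312813517782594,
     292929063047982382924316698678598740496532716056683524582793890051153387988259849818372316,
     615865838069623944127797521638627865456016380587045842512892402317583008648433995109224672,
     931360769696726669240749068584120486920209907854867824248041459808062375179225598716692827,
     912157496626691645408666911019200066089658685868809500188682005933742756344395729028928986,
     962391248848831321502589303020549891245946538783277434497240149002442288866951410463453080,
     1712141650744961284574835420256973670758]
  | 3, 2 =>
    [533101348827825357648145493220668530562143240608928735308034475681783331050810420319630471,
     122059243218966697941923002238615924481553084169706056082723967473080379940318699472272673,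
     74940404553931164318521010326003702772793218997839347071500666907870336163552587496850452,
     375509017992640597631247439019146669780791964558656521831922277937225604029190774982301289,
     142666443178960894059518524698858608026111660453246117346792909101729502055687886601980936,
     262377398320172267688535257766317497866600926468842297377572022990996098270905468644317592,
     718309552833482665728278704750242646951964816470130944703756370204057953317001470091610564,
     127453679831717872294403476439130389793039636077006403553482754416438392878561880037311515,
     369213315630902798927212639086575603573577042232563448495911437817641689228976576191735042,
     918553637122383748024160073482220339362700184038308687227082277105352594724626711613378414,
     987409976968776546523369872436788305989961815009862403346291842435588191709283678234039242,
     963864080495029380551560136133776007918599637484244106741482254638848543199207161015343258,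
     245546966448633531831762098017171053367843521487299448257966803723160198117611262862194519,
     468867430241998262443377452753823561496538253205244090612583546275855709860464054918800235,
     535941944692722315835073781223750649035592446067049046311757475159587867710950202008595593,
     9909956485468615716678708489724413895856539691290049420405225629403767170690608361992930,
     751049377262152839654354143692105334537583953748421876439639242706259413225127608496116061,
     244882944081520486207510012336980871240594682136223193670858342430647743713470973301776676,
     266844678401380935162224288315622635141775365477679893842130399032801104350615639284090966,
     653971444806556396762040191561236234389198675351840260174190333580035976757292221082969022,
     829134897258680]
  | 3, 3 =>
    [65120700355010592740050414409915948718250046209404418496044122810038035367851282555865645,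
     342353957709028662925923782547647975483970461057540438770695464450376066616288744676254864,
     112763802203833304629007047681177224433215210375958709398122521754896198744374206264445964,
     467438740270405731621155369398704638038378448630798086253089530474138274564339611970814097,
     39034651231382946823341405299531263030007309400443172946655613690178274774663545991939703,
     764318390918957313334061537106653783687895982692598079310200710888460619996402271344002174,
     605234409789760032490713339185743088380663128439464871206521869805572940227040024523790088,
     432044484901805733176438189973942360553417532676420247802710541257372681964502679532810731,
     72238065414724539622926466779297089470012258954707321153735946341677759]
  | _, _ => []

/-- The colors of some vertices in a coloring that gives the same color to the vertices `0` and
`154`. The vertices `0`, `87` and `153` form a triangle. -/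
def precolored (i j : Fin 4) : List (ℕ × Fin 4) :=
  [(0, 0), (154, 0), (87, 1), (153, 2), (128, i), (131, j)]

theorem length_vertices : vertices.length = 319 := by decide +kernel

theorem nodup_vertices : vertices.Nodup := by decide +kernel

theorem unitApart_colorClass : ∀ k, ∀ z ∈ colorClass k, ∀ w ∈ colorClass k,
    unitApart z w = false := by decide +kernel

theorem unitApart_of_mem_edges : ∀ e ∈ edges, (e.1 < 319 ∧ e.2 < 319) ∧
    unitApart (vertices.getD e.1 0) (vertices.getD e.2 0) = true := by decide +kernel

set_option maxHeartbeats 0 in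
theorem refute_precolored (i j : Fin 4) :
    force (edgeMatrix edges) (fun T => force (2 ^ 319 - 1) fun full =>
      force (precoloredMask 319 (precolored i j) 0) fun a =>
      force (precoloredMask 319 (precolored i j) 1) fun b =>
      force (precoloredMask 319 (precolored i j) 2) fun c =>
      force (precoloredMask 319 (precolored i j) 3) fun d =>
      force ((branchingVertices i j).foldr (fun x m => Nat.add (Nat.mul (10 ^ 90) m) x) 0)
        fun hints => refute T full 100000 a b c d full .nil hints) = true := by
  fin_cases i <;> fin_cases j <;> decide +kernel

theorem exists_perm_fin_four : ∀ i j k : Fin 4, i ≠ j → i ≠ k → j ≠ k →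
    ∃ σ : Equiv.Perm (Fin 4), σ i = 0 ∧ σ j = 1 ∧ σ k = 2 := by decide +kernel

/-- The points of the graph in the plane. -/
def graphPoints : Set (EuclideanSpace ℝ (Fin 2)) := latticePoint '' {z | z ∈ vertices}

theorem getD_mem_vertices {v : ℕ} (hv : v < 319) : vertices.getD v 0 ∈ vertices := by
  rw [← length_vertices] at hv
  rw [List.getD_eq_getElem _ _ hv]
  exact List.getElem_mem hv

theorem ne_of_isProper {c : EuclideanSpace ℝ (Fin 2) → Fin 4}
    (hc : ∀ x ∈ graphPoints, ∀ y ∈ graphPoints, dist x y = 1 → c x ≠ c y) :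
    c (latticePoint (vertices.getD 0 0)) ≠ c (latticePoint (vertices.getD 154 0)) := by
  intro hpq
  have hadj : ∀ v < 319, ∀ w < 319, unitApart (vertices.getD v 0) (vertices.getD w 0) = true →
      c (latticePoint (vertices.getD v 0)) ≠ c (latticePoint (vertices.getD w 0)) :=
    fun v hv w hw h => hc _ ⟨_, getD_mem_vertices hv, rfl⟩ _ ⟨_, getD_mem_vertices hw, rfl⟩
      ((dist_latticePoint_eq_one_iff _ _).mpr h)
  obtain ⟨σ, h₀, h₁, h₂⟩ := exists_perm_fin_four _ _ _
    (hadj 0 (by norm_num) 87 (by norm_num) (by decide +kernel))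
    (hadj 0 (by norm_num) 153 (by norm_num) (by decide +kernel))
    (hadj 87 (by norm_num) 153 (by norm_num) (by decide +kernel))
  let f : ℕ → Fin 4 := fun v => σ (c (latticePoint (vertices.getD v 0)))
  have hf : ∀ v < 319, ∀ w < 319, (matrixRow (edgeMatrix edges) (2 ^ v)).testBit w = true →
      f v ≠ f w := by
    intro v hv w hw h
    have hlt : ∀ e ∈ edges, e.1 < 346 ∧ e.2 < 346 := fun e he => by
      have := (unitApart_of_mem_edges e he).1
      omega
    rcases mem_of_testBit_edgeMatrix hlt (by omega) h with h | h
    · exact σ.injective.ne (hadj v hv w hw (unitApart_of_mem_edges _ h).2)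
    · exact σ.injective.ne (hadj w hw v hv (unitApart_of_mem_edges _ h).2).symm
  have h := refute_precolored (f 128) (f 131)
  simp only [force_eq] at h
  refine (not_allowed_of_refute hf h).1 (allowed_precoloredMask ?_)
  simp only [precolored, List.forall_mem_cons, List.not_mem_nil, false_implies, implies_true,
    and_true]
  exact ⟨h₀, (congrArg σ hpq).symm.trans h₀, h₁, h₂⟩

theorem exists_isProper : ∃ c : EuclideanSpace ℝ (Fin 2) → Fin 4,
    ∀ x ∈ graphPoints, ∀ y ∈ graphPoints, dist x y = 1 → c x ≠ c y := by
  classical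
  have hex : ∀ x ∈ graphPoints, ∃ k, ∃ z ∈ colorClass k, latticePoint z = x := by
    rintro _ ⟨z, hz, rfl⟩
    simp only [vertices, Set.mem_ofPred_eq, List.mem_append] at hz
    rcases hz with h | h | h | h
    exacts [⟨0, z, h, rfl⟩, ⟨1, z, h, rfl⟩, ⟨2, z, h, rfl⟩, ⟨3, z, h, rfl⟩]
  choose! c hc using hex
  refine ⟨c, fun x hx y hy hxy he => ?_⟩
  obtain ⟨z, hz, rfl⟩ := hc x hx
  obtain ⟨w, hw, rfl⟩ := hc y hy
  rw [← he] at hw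
  rw [dist_latticePoint_eq_one_iff, unitApart_colorClass _ z hz w hw] at hxy
  cases hxy

theorem ncard_graphPoints : graphPoints.ncard = 319 := by
  classical
  rw [graphPoints, Set.ncard_image_of_injective _ latticePoint_injective,
    ← List.coe_toFinset, Set.ncard_coe_finset, List.toFinset_card_of_nodup nodup_vertices,
    length_vertices]

theorem dist_graphPoints :
    dist (latticePoint (vertices.getD 0 0)) (latticePoint (vertices.getD 154 0)) = 7 / 3 := by
  have h₀ : vertices.getD 0 0 = (1, 2, 9, 4) := by decide +kernel
  have h₁ : vertices.getD 154 0 = (29, 2, 9, 4) := by decide +kernel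
  rw [h₀, h₁, ← sq_eq_sq₀ dist_nonneg (by norm_num), dist_latticePoint_sq]
  norm_num

theorem stmt_5 :
    ∃ S : Set (EuclideanSpace ℝ (Fin 2)), S.Finite ∧ S.ncard = 319 ∧
      ∃ p ∈ S, ∃ q ∈ S, dist p q = 7 / 3 ∧
        (∃ c : EuclideanSpace ℝ (Fin 2) → Fin 4, (∀ x ∈ S, ∀ y ∈ S, dist x y = 1 → c x ≠ c y)) ∧
        (∀ c : EuclideanSpace ℝ (Fin 2) → Fin 4, (∀ x ∈ S, ∀ y ∈ S, dist x y = 1 → c x ≠ c y) → c p ≠ c q) := by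
  refine ⟨graphPoints, Set.finite_of_ncard_ne_zero (by rw [ncard_graphPoints]; norm_num),
    ncard_graphPoints, _, ⟨_, getD_mem_vertices (by norm_num), rfl⟩,
    _, ⟨_, getD_mem_vertices (by norm_num), rfl⟩, dist_graphPoints, exists_isProper,
    fun c hc => ne_of_isProper hc⟩
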